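/- arXiv:1311.1538 — 4 statements merged into one kernel-verified Lean document; each statement's English description precedes it below -/
import Mathlib

section
/- Let F be an algebraically closed field of characteristic 0 and let f₁, …, f_r ∈ F⟨X⟩. If the equations tr(f₁(A)) = … = tr(f_r(A)) = 0 have no common solution A ∈ Mₙ(F)^g for any n ∈ ℕ, then there exist scalars λ₁, …, λ_r ∈ F such that λ₁f₁ + ⋯ + λ_rf_r is cyclically equivalent to 1. -/
/-- Two free noncommutative polynomials are cyclically equivalent if their difference
lies in the `F`-linear span of commutators `p * q - q * p`. -/
def CycEq {F : Type*} [Field F] {g : ℕ} (f h : FreeAlgebra F (Fin g)) : Prop :=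
  f - h ∈ Submodule.span F
    {x : FreeAlgebra F (Fin g) | ∃ p q : FreeAlgebra F (Fin g), x = p * q - q * p}

/-!
A linear functional `φ` vanishing on commutators is a function on words invariant under rotation.
Such functions are interpolated on any finite set of words by traces of matrices: the shift on a
cycle of length `k`, with edges labelled by the letters of a word `w` of length `k` and one edge
of weight `c`, has trace a positive integer multiple of `c` on the rotations of `w` and trace zero
on all other nonempty words of length at most `k`, so direct sums of such cycles correct the trace
one cyclic class of longest words at a time.

If `1` is not in the span of the `f i` and the commutators, some `φ` vanishes on these but not at
`1`. Rescaled so that `φ 1` is the size of the matrices, it agrees on every `f i` with a trace,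
which makes these matrices a common zero.
-/

section WalkMatrix

variable {S X R : Type*} [DecidableEq S] [DecidableEq X] [Semiring R]

/-- The transfer matrix of the letter `x` for a walk on the state space `S`: leaving the state `s`
leads to `σ s`, reads the letter `ℓ s` and contributes the weight `d s`. -/
def walkMatrix (σ : S → S) (ℓ : S → X) (d : S → R) (x : X) : Matrix S S R :=
  .of fun s t => if t = σ s ∧ ℓ s = x then d s else 0

lemma prod_map_walkMatrix_apply [Fintype S] (σ : S → S) (ℓ : S → X) (d : S → R) (v : List X)
    (s t : S) :
    (v.map (walkMatrix σ ℓ d)).prod s t =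
      if t = σ^[v.length] s ∧ (List.iterate σ s v.length).map ℓ = v
      then ((List.iterate σ s v.length).map d).prod else 0 := by
  induction v generalizing s with
  | nil => simp [Matrix.one_apply, eq_comm]
  | cons x v ih =>
    rw [List.map_cons, List.prod_cons, Matrix.mul_apply, Finset.sum_eq_single (σ s)]
    · by_cases hx : ℓ s = x <;> simp [walkMatrix, ih, hx]
    · intro u _ hu
      simp [walkMatrix, hu]
    · simp

end WalkMatrix

section CycleMatrix

variable {n : ℕ} [NeZero n]

lemma val_add_nsmul_one (s : Fin n) (i : ℕ) : ((s + i • 1 : Fin n) : ℕ) = (s + i) % n := by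
  induction i with
  | zero => simp [Nat.mod_eq_of_lt s.isLt]
  | succ i ih => rw [succ_nsmul, ← add_assoc, Fin.val_add, ih]; simp [add_assoc]

lemma iterate_add_one_ne_self (s : Fin n) {i : ℕ} (hi : i ≠ 0) (hin : i < n) :
    (· + 1)^[i] s ≠ s := by
  intro h
  have hmod : s + i ≡ s + 0 [MOD n] := by
    simpa only [add_right_iterate, val_add_nsmul_one, Nat.ModEq, add_zero,
      Nat.mod_eq_of_lt s.isLt] using congrArg Fin.val h
  exact Nat.not_dvd_of_pos_of_lt (Nat.pos_of_ne_zero hi) hin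
    (Nat.modEq_zero_iff_dvd.mp (Nat.ModEq.add_left_cancel' _ hmod))

lemma iterate_add_one_self (s : Fin n) : (· + 1)^[n] s = s := by
  rw [add_right_iterate]
  ext
  simp [val_add_nsmul_one, Nat.mod_eq_of_lt s.isLt]

lemma list_iterate_add_one_eq_rotate (s : Fin n) :
    List.iterate (· + 1) s n = (List.finRange n).rotate s := by
  refine List.ext_getElem (by simp) fun i _ _ => ?_
  simp [Fin.ext_iff, val_add_nsmul_one, List.getElem_rotate, add_comm]

variable {X R : Type*} [DecidableEq X]

/-- The transfer matrices of a cycle of length `n` with edges labelled by `w`, where the edge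
leaving `0` has weight `c` and all others have weight `1`. -/
def cycleMatrix [Semiring R] (w : Fin n → X) (c : R) : X → Matrix (Fin n) (Fin n) R :=
  walkMatrix (· + 1) w (Function.update 1 0 c)

lemma trace_prod_map_cycleMatrix_of_lt [Semiring R] (w : Fin n → X) (c : R) {v : List X}
    (hv : v ≠ []) (hvn : v.length < n) : (v.map (cycleMatrix w c)).prod.trace = 0 := by
  refine Finset.sum_eq_zero fun s _ => ?_
  rw [Matrix.diag_apply, cycleMatrix, prod_map_walkMatrix_apply, if_neg]
  exact fun h => iterate_add_one_ne_self s (by simpa using hv) hvn h.1.symm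

lemma trace_prod_map_cycleMatrix_of_length_eq [CommSemiring R] (w : Fin n → X) (c : R)
    {v : List X} (hv : v.length = n) :
    (v.map (cycleMatrix w c)).prod.trace =
      Finset.card {s : Fin n | (List.ofFn w).rotate s = v} * c := by
  have weight_eq (s : Fin n) :
      ((List.ofFn (Function.update (1 : Fin n → R) 0 c)).rotate s).prod = c := by
    rw [(List.IsRotated.forall _ _).perm.prod_eq, List.prod_ofFn,
      Finset.prod_update_of_mem (Finset.mem_univ _)]
    simp
  have diag_eq (s : Fin n) : (v.map (cycleMatrix w c)).prod s s =
      if (List.ofFn w).rotate s = v then c else 0 := by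
    simp [cycleMatrix, prod_map_walkMatrix_apply, hv, iterate_add_one_self,
      list_iterate_add_one_eq_rotate, weight_eq, List.map_rotate, ← List.ofFn_eq_map]
  simp [Matrix.trace, diag_eq, Finset.sum_ite]

end CycleMatrix

section Interpolation

variable {X : Type*}

lemma apply_prod_map_eq_of_isRotated {M N : Type*} [Monoid M] {φ : M → N}
    (hφ : ∀ p q, φ (p * q) = φ (q * p)) (a : X → M) {u v : List X} (h : u ~r v) :
    φ (u.map a).prod = φ (v.map a).prod := by
  obtain ⟨k, rfl⟩ := h
  rw [List.rotate_eq_drop_append_take_mod, List.map_append, List.prod_append, hφ,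
    ← List.prod_append, ← List.map_append, List.take_append_drop]

lemma exists_trace_prod_map_eq_add {R : Type*} [Semiring R] {m n : ℕ}
    (A : X → Matrix (Fin m) (Fin m) R) (B : X → Matrix (Fin n) (Fin n) R) :
    ∃ C : X → Matrix (Fin (m + n)) (Fin (m + n)) R, ∀ v : List X,
      (v.map C).prod.trace = (v.map A).prod.trace + (v.map B).prod.trace := by
  let e := Matrix.reindexAlgEquiv ℕ R (finSumFinEquiv (m := m) (n := n))
  refine ⟨fun x => e (.fromBlocks (A x) 0 0 (B x)), fun v => ?_⟩
  have prod_eq : (v.map fun x => e (.fromBlocks (A x) 0 0 (B x))).prod =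
      e (.fromBlocks (v.map A).prod 0 0 (v.map B).prod) := by
    induction v with
    | nil => simp
    | cons x v ih => simp [ih, ← map_mul, Matrix.fromBlocks_multiply]
  rw [prod_eq]
  simp [e, Matrix.trace, Fin.sum_univ_add]

variable {F : Type*} [Field F] [CharZero F]

lemma exists_trace_prod_map_eq_and_eq_zero {w : List X} (hw : w ≠ []) (a : F) :
    ∃ B : X → Matrix (Fin w.length) (Fin w.length) F, (w.map B).prod.trace = a ∧
      ∀ v ≠ [], v.length ≤ w.length → ¬ v ~r w → (v.map B).prod.trace = 0 := by
  classical
  have : NeZero w.length := ⟨by simpa using hw⟩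
  let m := Finset.card {s : Fin w.length | w.rotate s = w}
  have hm : (m : F) ≠ 0 :=
    Nat.cast_ne_zero.mpr (Finset.card_ne_zero_of_mem (a := 0) (by simp))
  refine ⟨cycleMatrix w.get (a / m), ?_, fun v hv hvw hrot => ?_⟩
  · rw [trace_prod_map_cycleMatrix_of_length_eq _ _ rfl, List.ofFn_get, mul_div_cancel₀ _ hm]
  · obtain hlt | heq := hvw.lt_or_eq
    · exact trace_prod_map_cycleMatrix_of_lt _ _ hv hlt
    · have no_rotation (s : Fin w.length) : w.rotate s ≠ v :=
        fun hs => hrot (hs ▸ List.IsRotated.forall w s)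
      simp [trace_prod_map_cycleMatrix_of_length_eq _ _ heq, no_rotation]

lemma exists_trace_prod_map_eq (T : Finset (List X)) :
    ∃ n : ℕ, n ≠ 0 ∧ ∀ τ : List X → F, (∀ u v, u ~r v → τ u = τ v) →
      ∃ A : X → Matrix (Fin n) (Fin n) F, ∀ v ∈ T, v ≠ [] → (v.map A).prod.trace = τ v := by
  classical
  refine Finset.induction_on_max_value List.length T
    ⟨1, one_ne_zero, fun _ _ => ⟨0, by simp⟩⟩ fun w T _ hmax ih => ?_
  obtain ⟨n, hn, interpolates⟩ := ih
  by_cases hw : w = [] ∨ ∃ v ∈ T, v ≠ [] ∧ v ~r w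
  · refine ⟨n, hn, fun τ hτ => ?_⟩
    obtain ⟨A, hA⟩ := interpolates τ hτ
    refine ⟨A, Finset.forall_mem_insert .. |>.mpr ⟨fun hne => ?_, hA⟩⟩
    obtain ⟨v, hvT, hv, hvw⟩ := hw.resolve_left hne
    rw [← apply_prod_map_eq_of_isRotated Matrix.trace_mul_comm A hvw, hA v hvT hv, hτ v w hvw]
  · push Not at hw
    obtain ⟨hne, hrot⟩ := hw
    refine ⟨n + w.length, by omega, fun τ hτ => ?_⟩
    obtain ⟨A, hA⟩ := interpolates τ hτ
    obtain ⟨B, hBw, hB⟩ :=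
      exists_trace_prod_map_eq_and_eq_zero hne (τ w - (w.map A).prod.trace)
    obtain ⟨C, hC⟩ := exists_trace_prod_map_eq_add A B
    refine ⟨C, Finset.forall_mem_insert .. |>.mpr ⟨fun _ => ?_, fun v hvT hv => ?_⟩⟩
    · rw [hC, hBw, add_sub_cancel]
    · rw [hC, hA v hvT hv, hB v hv (hmax v hvT) (hrot v hvT hv), add_zero]

end Interpolation

section FreeAlgebra

variable {X : Type*}

lemma basisFreeMonoid_apply {R : Type*} [CommSemiring R] (v : FreeMonoid X) :
    FreeAlgebra.basisFreeMonoid R X v = (v.toList.map (FreeAlgebra.ι R)).prod := by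
  simp [FreeAlgebra.basisFreeMonoid, FreeAlgebra.equivMonoidAlgebraFreeMonoid,
    FreeMonoid.lift_apply]

lemma linearMap_apply_eq_of_eqOn_support {κ R M N : Type*} [Semiring R] [AddCommMonoid M]
    [Module R M] [AddCommMonoid N] [Module R N] (b : Module.Basis κ R M) {φ ψ : M →ₗ[R] N} {x : M}
    (h : ∀ k ∈ (b.repr x).support, φ (b k) = ψ (b k)) : φ x = ψ x := by
  rw [← b.linearCombination_repr x, Finsupp.linearCombination_apply, map_finsuppSum,
    map_finsuppSum]
  exact Finsupp.sum_congr fun k hk => by rw [map_smul, map_smul, h k hk]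

lemma exists_trace_lift_eq {F ι : Type*} [Field F] [CharZero F] [Finite ι]
    (f : ι → FreeAlgebra F X) :
    ∃ n : ℕ, n ≠ 0 ∧ ∀ φ : FreeAlgebra F X →ₗ[F] F,
      (∀ p q, φ (p * q) = φ (q * p)) → φ 1 = n →
        ∃ A : X → Matrix (Fin n) (Fin n) F,
          ∀ i, (FreeAlgebra.lift F A (f i)).trace = φ (f i) := by
  classical
  have := Fintype.ofFinite ι
  let words (i : ι) := ((FreeAlgebra.basisFreeMonoid F X).repr (f i)).support
  obtain ⟨n, hn, interpolates⟩ :=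
    exists_trace_prod_map_eq (F := F)
      (Finset.univ.biUnion fun i => (words i).image FreeMonoid.toList)
  refine ⟨n, hn, fun φ hφ hφ1 => ?_⟩
  obtain ⟨A, hA⟩ := interpolates (fun v => φ (v.map (FreeAlgebra.ι F)).prod)
    fun _ _ => apply_prod_map_eq_of_isRotated hφ _
  refine ⟨A, fun i => linearMap_apply_eq_of_eqOn_support (FreeAlgebra.basisFreeMonoid F X)
    (x := f i) (φ := Matrix.traceLinearMap (Fin n) F F ∘ₗ (FreeAlgebra.lift F A).toLinearMap)
    fun v hv => ?_⟩
  have lift_word : FreeAlgebra.lift F A (v.toList.map (FreeAlgebra.ι F)).prod =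
      (v.toList.map A).prod := by
    simp [map_list_prod, Function.comp_def]
  simp only [basisFreeMonoid_apply, LinearMap.comp_apply, AlgHom.toLinearMap_apply, lift_word,
    Matrix.traceLinearMap_apply]
  obtain hnil | hne := eq_or_ne v.toList []
  · simp [hnil, hφ1]
  · exact hA _ (by simpa using ⟨i, hv⟩) hne

end FreeAlgebra

/-- The linear span of the commutators of an algebra. It encodes cyclic equivalence over an
arbitrary alphabet: `CycEq f h` unfolds to `f - h ∈ commutatorSpan F (FreeAlgebra F (Fin g))`. -/
def commutatorSpan (R A : Type*) [CommRing R] [Ring A] [Algebra R A] : Submodule R A :=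
  .span R {x | ∃ p q : A, x = p * q - q * p}

lemma apply_mul_comm_of_commutatorSpan_le_ker {R A M : Type*} [CommRing R] [Ring A] [Algebra R A]
    [AddCommGroup M] [Module R M] {φ : A →ₗ[R] M} (hφ : commutatorSpan R A ≤ LinearMap.ker φ)
    (p q : A) : φ (p * q) = φ (q * p) := by
  have hpq : φ (p * q - q * p) = 0 := hφ (Submodule.subset_span ⟨p, q, rfl⟩)
  rwa [map_sub, sub_eq_zero] at hpq

lemma one_mem_span_range_sup_commutatorSpan {F X ι : Type*} [Field F] [CharZero F] [Finite ι]
    {f : ι → FreeAlgebra F X}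
    (hf : ∀ (n : ℕ) (A : X → Matrix (Fin (n + 1)) (Fin (n + 1)) F),
      ∃ i, (FreeAlgebra.lift F A (f i)).trace ≠ 0) :
    1 ∈ Submodule.span F (Set.range f) ⊔ commutatorSpan F (FreeAlgebra F X) := by
  by_contra h1
  obtain ⟨φ, hφ1, hφ⟩ := Submodule.exists_le_ker_of_notMem h1
  obtain ⟨hφf, hφc⟩ := sup_le_iff.mp hφ
  obtain ⟨n, hn, interpolates⟩ := exists_trace_lift_eq f
  obtain ⟨n, rfl⟩ := Nat.exists_eq_succ_of_ne_zero hn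
  obtain ⟨A, hA⟩ := interpolates (((n + 1 : ℕ) / φ 1) • φ)
    (fun p q => by simp [apply_mul_comm_of_commutatorSpan_le_ker hφc p q])
    (by simp [hφ1])
  obtain ⟨i, hi⟩ := hf n A
  have hφfi : φ (f i) = 0 := hφf (Submodule.subset_span ⟨i, rfl⟩)
  exact hi (by simp [hA, hφfi])

theorem trace_no_common_zero_general {F X ι : Type*} [Field F] [CharZero F] [Fintype ι]
    (f : ι → FreeAlgebra F X)
    (hf : ∀ (n : ℕ) (A : X → Matrix (Fin (n + 1)) (Fin (n + 1)) F),
      ∃ i, (FreeAlgebra.lift F A (f i)).trace ≠ 0) :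
    ∃ c : ι → F, ∑ i, c i • f i - 1 ∈ commutatorSpan F (FreeAlgebra F X) := by
  obtain ⟨y, hy, z, hz, hyz⟩ :=
    Submodule.mem_sup.mp (one_mem_span_range_sup_commutatorSpan hf)
  obtain ⟨c, rfl⟩ := (Submodule.mem_span_range_iff_exists_fun F).mp hy
  refine ⟨c, ?_⟩
  rw [← hyz, sub_add_cancel_left]
  exact neg_mem hz

/-- If the traces of `f 0, …, f (r-1)` have no common zero on `g`-tuples of `n × n`
matrices for any `n ≥ 1`, then some linear combination of the `f i` is cyclically
equivalent to `1`. -/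
theorem trace_no_common_zero {F : Type*} [Field F] [IsAlgClosed F] [CharZero F]
    (g r : ℕ) (f : Fin r → FreeAlgebra F (Fin g))
    (hnocommon : ∀ (n : ℕ) (A : Fin g → Matrix (Fin (n + 1)) (Fin (n + 1)) F),
      ∃ i : Fin r, Matrix.trace (FreeAlgebra.lift F A (f i)) ≠ 0) :
    ∃ lam : Fin r → F, CycEq (∑ i : Fin r, lam i • f i) 1 :=
  trace_no_common_zero_general f hnocommon
end

section
/- Let F be an algebraically closed field of characteristic 0 and let g ≥ 2. For every n ∈ ℕ there exist f₁, f₂ ∈ F⟨X⟩ such that: (a) there is no A ∈ Mₙ(F)^g with tr(f₁(A)) = tr(f₂(A)) = 0; and (b) there are no scalars λ₁, λ₂ ∈ F and no p ∈ F⟨X⟩ satisfying p(A) = 0 for all A ∈ Mₙ(F)^g such that λ₁f₁ + λ₂f₂ is cyclically equivalent to 1 + p. -/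
/-!
Fix `n`. Let `T` be an endomorphism of a module of rank `N` and `f` an alternating `N`-linear form
on it. Applying `T` to one argument at a time and summing multiplies `f` by the trace of `T`. Take
for the module `Mₙ(F)`, for `T` the left multiplication by `x₁`, whose trace is `n tr(x₁)`, and for
`f` the trace of a Capelli polynomial `c`. The resulting polynomial `h` satisfies
`tr h = n tr(x₁) tr(c)` on `Mₙ(F)`: a product of two traces is the trace of one polynomial.

So `f₁ = x₁` and `f₂ = 1 - h` have no common trace zero, since `tr f₂ = n` where `tr x₁ = 0`.
If `λ₁ f₁ + λ₂ f₂` were cyclically equivalent to `1 + p`, then everywhere on `Mₙ(F)`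
`λ₁ tr(x₁) + λ₂ (n - n tr(x₁) tr(c)) = n`. At the origin this gives `λ₂ = 1`, hence `tr(c)` is
constant where `tr(x₁) ≠ 0`. But `c` can be chosen with `tr(c) = 0` at `(1, 0, …, 0)` and
`tr(x₁) = tr(c) = 1` at a generating tuple of `Mₙ(F)`.
-/

open Matrix Function FreeAlgebra

theorem sum_alternatingMap_update_eq_trace_mul {R M ι : Type*} [CommRing R] [AddCommGroup M]
    [Module R M] [Fintype ι] [DecidableEq ι] (b : Module.Basis ι R M) (f : M [⋀^ι]→ₗ[R] R)
    (T : M →ₗ[R] M) (w : ι → M) :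
    ∑ k, f (update w k (T (w k))) = LinearMap.trace R M T * f w := by
  -- Cramer's rule turns the `k`-th summand into the `k`-th diagonal entry of `adj(w) * T * w`.
  have coords (k : ι) : b.repr (T (w k)) = (LinearMap.toMatrix b b T * b.toMatrix w).col k := by
    rw [← LinearMap.toMatrix_mulVec_repr b b]
    rfl
  have det_update (k : ι) : b.det (update w k (T (w k))) =
      ((b.toMatrix w).adjugate * (LinearMap.toMatrix b b T * b.toMatrix w)) k k := by
    rw [b.det_apply, b.toMatrix_update, coords, ← cramer_apply, cramer_eq_adjugate_mulVec]
    rfl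
  have det_sum : ∑ k, b.det (update w k (T (w k))) = LinearMap.trace R M T * b.det w := calc
    _ = ((b.toMatrix w).adjugate * (LinearMap.toMatrix b b T * b.toMatrix w)).trace :=
      Finset.sum_congr rfl fun k _ => det_update k
    _ = (LinearMap.toMatrix b b T * (b.toMatrix w * (b.toMatrix w).adjugate)).trace := by
      rw [trace_mul_comm, Matrix.mul_assoc]
    _ = LinearMap.trace R M T * b.det w := by
      rw [mul_adjugate, Matrix.mul_smul, Matrix.mul_one, trace_smul,
        ← LinearMap.trace_eq_matrix_trace, ← b.det_apply, smul_eq_mul, mul_comm]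
  rw [f.eq_smul_basis_det b]
  simp only [AlternatingMap.smul_apply, smul_eq_mul]
  rw [← Finset.mul_sum, det_sum, mul_left_comm]

theorem trace_mulLeft_matrix {R m : Type*} [CommRing R] [Fintype m] (a : Matrix m m R) :
    LinearMap.trace R (Matrix m m R) (LinearMap.mulLeft R a) = Fintype.card m * a.trace := by
  classical
  have repr_apply (M : Matrix m m R) (ij : m × m) : (stdBasis R m m).repr M ij = M ij.1 ij.2 := by
    simp [stdBasis]
  rw [LinearMap.trace_eq_matrix_trace R (stdBasis R m m), Matrix.trace, Fintype.sum_prod_type]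
  simp only [Matrix.diag_apply, LinearMap.toMatrix_apply, LinearMap.mulLeft_apply, repr_apply,
    stdBasis_eq_single, mul_single_apply_same, mul_one, Finset.sum_const, Finset.card_univ,
    nsmul_eq_mul, ← Finset.mul_sum]
  rfl

section Capelli

variable {R S S' : Type*} [CommRing R] [Ring S] [Algebra R S] [Ring S'] [Algebra R S'] {N : ℕ}

variable (R) in
/-- The Capelli polynomial `∑ σ, sign σ • ∏ k, u k * w (σ k) * v k`, as an alternating map in `w`.
The usual one has a single coefficient between consecutive arguments; here that coefficient is the
product `v k * u (k + 1)`, which makes every factor of the same shape. Its trace on `Mₙ` is,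
for `N = n ^ 2`, an alternating form of top degree. -/
noncomputable def capelli (u v : Fin N → S) : S [⋀^Fin N]→ₗ[R] S :=
  MultilinearMap.alternatization <|
    (MultilinearMap.mkPiAlgebraFin R N S).compLinearMap fun k => LinearMap.mulLeftRight R (u k, v k)

theorem capelli_apply (u v w : Fin N → S) :
    capelli R u v w =
      ∑ σ : Equiv.Perm (Fin N), σ.sign • (List.ofFn fun k => u k * w (σ k) * v k).prod := by
  simp [capelli, MultilinearMap.alternatization_apply]

theorem map_capelli (φ : S →ₐ[R] S') (u v w : Fin N → S) :
    φ (capelli R u v w) = capelli R (φ ∘ u) (φ ∘ v) (φ ∘ w) := by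
  simp [capelli_apply, Units.smul_def, map_list_prod, List.map_ofFn, Function.comp_def]

variable (R) in
/-- The derivative of the Capelli polynomial along `w ↦ a * w`: the sum of the polynomials obtained
by multiplying one of the alternating arguments by `a`. On matrices it turns a product of two traces
into the trace of a single polynomial. -/
noncomputable def capelliDeriv (a : S) (u v w : Fin N → S) : S :=
  ∑ k, capelli R u v (update w k (a * w k))

theorem map_capelliDeriv (φ : S →ₐ[R] S') (a : S) (u v w : Fin N → S) :
    φ (capelliDeriv R a u v w) = capelliDeriv R (φ a) (φ ∘ u) (φ ∘ v) (φ ∘ w) := by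
  simp [capelliDeriv, map_capelli, Function.comp_update]

variable {m : Type*} [Fintype m] [DecidableEq m]

theorem trace_capelliDeriv (e : Fin N ≃ m × m) (a : Matrix m m R) (u v w : Fin N → Matrix m m R) :
    (capelliDeriv R a u v w).trace = Fintype.card m * a.trace * (capelli R u v w).trace := by
  rw [capelliDeriv, trace_sum, ← trace_mulLeft_matrix]
  exact sum_alternatingMap_update_eq_trace_mul ((stdBasis R m m).reindex e.symm)
    ((traceLinearMap m R R).compAlternatingMap (capelli R u v)) (LinearMap.mulLeft R a) w

theorem trace_map_capelliDeriv (e : Fin N ≃ m × m) (φ : S →ₐ[R] Matrix m m R) (a : S)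
    (u v w : Fin N → S) :
    (φ (capelliDeriv R a u v w)).trace =
      Fintype.card m * (φ a).trace * (φ (capelli R u v w)).trace := by
  rw [map_capelliDeriv, trace_capelliDeriv e, map_capelli]

theorem trace_prod_single_mul_mul_single [NeZero N] (p : m) (i j : Fin N → m)
    (w : Fin N → Matrix m m R) :
    (List.ofFn fun k => single p (i k) 1 * w k * single (j k) p 1).prod.trace =
      ∏ k, w k (i k) (j k) := by
  -- Each factor lies in the corner `R • single p p 1`, so the matrices multiply as scalars.
  have factor (k : Fin N) : single p (i k) 1 * w k * single (j k) p 1 =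
      w k (i k) (j k) • single p p (1 : R) := by
    simp [single_mul_mul_single]
  have pow_single : single p p (1 : R) ^ N = single p p 1 :=
    IsIdempotentElem.pow_eq (by simp [IsIdempotentElem]) (NeZero.ne N)
  simp only [factor]
  rw [← MultilinearMap.mkPiAlgebraFin_apply (R := R), MultilinearMap.map_smul_univ,
    MultilinearMap.mkPiAlgebraFin_apply_const, pow_single, trace_smul, trace_single_eq_same,
    smul_eq_mul, mul_one]

theorem trace_capelli_single [NeZero N] (p : m) (e : Fin N ≃ m × m) :
    (capelli R (fun k => single p (e k).1 (1 : R)) (fun k => single (e k).2 p 1)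
      (fun k => single (e k).1 (e k).2 1)).trace = 1 := by
  have entry (k l : Fin N) : single (e k).1 (e k).2 (1 : R) (e l).1 (e l).2 =
      (1 : Matrix (Fin N) (Fin N) R) k l := by
    simp [single_apply, one_apply, ← Prod.ext_iff]
  simp only [capelli_apply, trace_sum, Units.smul_def, trace_smul,
    trace_prod_single_mul_mul_single, entry]
  rw [← det_one (n := Fin N), det_apply]
  simp only [Units.smul_def]

end Capelli

theorem adjoin_single_permMatrix_eq_top {R m : Type*} [CommSemiring R] [Fintype m] [DecidableEq m]
    {σ : Equiv.Perm m} (hσ : σ.IsCycleOn Set.univ) (i₀ : m) :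
    Algebra.adjoin R {single i₀ i₀ 1, σ.permMatrix R} = ⊤ := by
  set S := Algebra.adjoin R {single i₀ i₀ 1, σ.permMatrix R}
  have corner_mem : single i₀ i₀ 1 ∈ S := Algebra.subset_adjoin (by simp)
  have perm_pow_mem (k : ℕ) : (σ ^ k).permMatrix R ∈ S := by
    induction k with
    | zero => simp
    | succ k ih =>
      rw [pow_succ, permMatrix_mul]
      exact S.mul_mem (Algebra.subset_adjoin (by simp)) ih
  have single_mem (i j : m) : single i j 1 ∈ S := by
    obtain ⟨k, hk⟩ := hσ.exists_pow_eq' Set.finite_univ (Set.mem_univ i) (Set.mem_univ i₀)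
    obtain ⟨l, hl⟩ := hσ.exists_pow_eq' Set.finite_univ (Set.mem_univ i₀) (Set.mem_univ j)
    have : single i j 1 = (σ ^ k).permMatrix R * single i₀ i₀ 1 * (σ ^ l).permMatrix R := by
      rw [PEquiv.toMatrix_toPEquiv_mul, PEquiv.mul_toMatrix_toPEquiv]
      ext a b
      simp [single_apply, ← hk, ← hl, Equiv.eq_symm_apply]
    rw [this]
    exact S.mul_mem (S.mul_mem (perm_pow_mem k) corner_mem) (perm_pow_mem l)
  refine eq_top_iff.mpr fun M _ => ?_
  rw [matrix_eq_sum_single M]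
  refine S.sum_mem fun i _ => S.sum_mem fun j _ => ?_
  simpa [smul_single] using S.smul_mem (single_mem i j) (M i j)

theorem exists_adjoin_pair_eq_top (R m : Type*) [CommRing R] [Fintype m] [DecidableEq m]
    [Nonempty m] :
    ∃ E P : Matrix m m R, E.trace = 1 ∧ IsUnit P ∧ Algebra.adjoin R {E, P} = ⊤ := by
  obtain ⟨i₀⟩ := ‹Nonempty m›
  obtain ⟨σ, hσ, -⟩ := (Finset.univ : Finset m).exists_cycleOn
  refine ⟨single i₀ i₀ 1, σ.permMatrix R, trace_single_eq_same i₀ 1, ?_,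
    adjoin_single_permMatrix_eq_top (by simpa using hσ) i₀⟩
  rw [isUnit_iff_isUnit_det, det_permutation]
  exact (Units.isUnit _).map (Int.castRingHom R)

theorem exists_lift_eq_and_lift_single_eq_zero {R X B : Type*} [CommRing R] [Ring B] [Algebra R B]
    [DecidableEq X] {x y : X} (hyx : y ≠ x) {A : X → B} (hy : IsUnit (A y))
    (hA : Algebra.adjoin R {A x, A y} = ⊤) (b : B) :
    ∃ q : FreeAlgebra R X, lift R A q = b ∧ lift R (Pi.single x (1 : B)) q = 0 := by
  have lift_surjective : Surjective (lift R A) := by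
    rw [← AlgHom.range_eq_top, ← Algebra.adjoin_range_eq_range_freeAlgebra_lift, eq_top_iff, ← hA]
    exact Algebra.adjoin_mono (by simp [Set.insert_subset_iff])
  obtain ⟨c, hc⟩ := hy.dvd (a := b)
  obtain ⟨q, rfl⟩ := lift_surjective c
  exact ⟨ι R y * q, by simp [hc], by simp [hyx]⟩

theorem exists_trace_lift_capelli_eq_one_and_eq_zero (R : Type*) [CommRing R] {X : Type*}
    [DecidableEq X] {x y : X} (hyx : y ≠ x) (m : Type*) [Fintype m] [DecidableEq m] [Nonempty m]
    {N : ℕ} (e : Fin N ≃ m × m) :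
    ∃ (A : X → Matrix m m R) (u v w : Fin N → FreeAlgebra R X),
      (A x).trace = 1 ∧
      (lift R A (capelli R u v w)).trace = 1 ∧
      lift R (Pi.single x 1 : X → Matrix m m R) (capelli R u v w) = 0 := by
  obtain ⟨E, P, hE, hP, hEP⟩ := exists_adjoin_pair_eq_top R m
  let A : X → Matrix m m R := fun z => if z = x then E else P
  have p : m := Classical.arbitrary m
  have : NeZero N := ⟨by rintro rfl; exact (e.symm (p, p)).elim0⟩
  have exists_lift (M : Matrix m m R) : ∃ q : FreeAlgebra R X,
      lift R A q = M ∧ lift R (Pi.single x 1 : X → Matrix m m R) q = 0 :=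
    exists_lift_eq_and_lift_single_eq_zero hyx (by simpa [A, hyx] using hP)
      (by simpa [A, hyx] using hEP) M
  choose q lift_q lift_single_q using exists_lift
  refine ⟨A, fun k => q (single p (e k).1 1), fun k => q (single (e k).2 p 1),
    fun k => q (single (e k).1 (e k).2 1), by simp [A, hE], ?_, ?_⟩
  · simp only [map_capelli, comp_def, lift_q, trace_capelli_single]
  · rw [map_capelli]
    exact (capelli R _ _).map_coord_zero 0 (lift_single_q _)

theorem CycEq.trace_lift_eq {F : Type*} [Field F] {g : ℕ} {m : Type*} [Fintype m] [DecidableEq m]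
    {f h : FreeAlgebra F (Fin g)} (hfh : CycEq f h) (A : Fin g → Matrix m m F) :
    (lift F A f).trace = (lift F A h).trace := by
  have span_le_ker : Submodule.span F {x | ∃ p q : FreeAlgebra F (Fin g), x = p * q - q * p} ≤
      LinearMap.ker (traceLinearMap m F F ∘ₗ (lift F A).toLinearMap) := by
    rw [Submodule.span_le]
    rintro _ ⟨p, q, rfl⟩
    simp [trace_mul_comm (lift F A p)]
  simpa [sub_eq_zero] using span_le_ker hfh

theorem dimension_dependent_failure_general {F : Type*} [Field F] (g : ℕ) (hg : 2 ≤ g) (n : ℕ)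
    (hn : (n : F) ≠ 0) :
    ∃ f₁ f₂ : FreeAlgebra F (Fin g),
      (∀ A : Fin g → Matrix (Fin n) (Fin n) F,
        Matrix.trace (FreeAlgebra.lift F A f₁) ≠ 0 ∨
        Matrix.trace (FreeAlgebra.lift F A f₂) ≠ 0) ∧
      ¬ ∃ (lam₁ lam₂ : F) (p : FreeAlgebra F (Fin g)),
          (∀ A : Fin g → Matrix (Fin n) (Fin n) F, FreeAlgebra.lift F A p = 0) ∧
          CycEq (lam₁ • f₁ + lam₂ • f₂) (1 + p) := by
  have : NeZero n := ⟨by rintro rfl; exact hn Nat.cast_zero⟩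
  let x : Fin g := ⟨0, by lia⟩
  let y : Fin g := ⟨1, by lia⟩
  have hyx : y ≠ x := by simp [x, y]
  obtain ⟨A₀, u, v, w, trace_x, trace_c, c_single⟩ :=
    exists_trace_lift_capelli_eq_one_and_eq_zero F hyx (Fin n) finProdFinEquiv.symm
  let c : FreeAlgebra F (Fin g) := capelli F u v w
  let h := capelliDeriv F (ι F x) u v w
  have trace_h (A : Fin g → Matrix (Fin n) (Fin n) F) :
      (lift F A h).trace = n * (A x).trace * (lift F A c).trace := by
    simpa using trace_map_capelliDeriv finProdFinEquiv.symm (lift F A) (ι F x) u v w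
  refine ⟨ι F x, 1 - h, fun A => ?_, ?_⟩
  · by_cases hx : (A x).trace = 0
    · right
      simpa [trace_h, hx] using hn
    · left
      simpa using hx
  · rintro ⟨lam₁, lam₂, p, hp, hcyc⟩
    have trace_eq (A : Fin g → Matrix (Fin n) (Fin n) F) :
        lam₁ * (A x).trace + lam₂ * (n - n * (A x).trace * (lift F A c).trace) = n := by
      simpa [hp A, trace_h] using hcyc.trace_lift_eq A
    have at_zero : lam₂ * n = n := by simpa using trace_eq 0
    have at_single : lam₁ * n + lam₂ * n = n := by
      simpa [c, c_single] using trace_eq (Pi.single x 1)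
    have at_generators : lam₁ = n := by simpa [c, trace_x, trace_c] using trace_eq A₀
    have n_mul_n : (n : F) * n = 0 := by
      linear_combination at_single - at_zero - n * at_generators
    exact hn (mul_self_eq_zero.mp n_mul_n)

/-- The Spurnullstellensatz fails in a dimension-dependent context: for any fixed
`n ≥ 1` there are `f₁, f₂` whose traces have no common zero on `Mₙ(F)^g`, yet no
linear combination `λ₁ f₁ + λ₂ f₂` is cyclically equivalent to `1 + p` for a
polynomial identity `p` of `Mₙ(F)`. -/
theorem dimension_dependent_failure {F : Type*} [Field F] [IsAlgClosed F] [CharZero F]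
    (g : ℕ) (hg : 2 ≤ g) (n : ℕ) (hn : 0 < n) :
    ∃ f₁ f₂ : FreeAlgebra F (Fin g),
      (∀ A : Fin g → Matrix (Fin n) (Fin n) F,
        Matrix.trace (FreeAlgebra.lift F A f₁) ≠ 0 ∨
        Matrix.trace (FreeAlgebra.lift F A f₂) ≠ 0) ∧
      ¬ ∃ (lam₁ lam₂ : F) (p : FreeAlgebra F (Fin g)),
          (∀ A : Fin g → Matrix (Fin n) (Fin n) F, FreeAlgebra.lift F A p = 0) ∧
          CycEq (lam₁ • f₁ + lam₂ • f₂) (1 + p) :=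
  dimension_dependent_failure_general g hg n (Nat.cast_ne_zero.mpr hn.ne')
end

section
/- (Constrained truncated tracial moment problem, complex case) Let d ∈ ℕ, let f₁, …, f_r ∈ ℂ⟨X⟩_d, and let L : ℂ⟨X⟩_d → ℂ be a tracial linear functional satisfying L(1) = 1 and L(f₁) = … = L(f_r) = 0. Then L lies in the linear span of the set of functionals φ_A, where A ranges over all tuples A ∈ Mₙ(ℂ)^g (over all n ∈ ℕ) satisfying tr(f₁(A)) = … = tr(f_r(A)) = 0. -/
/-- The subspace `F⟨X⟩_d` of the free algebra spanned by words of length at most `d`. -/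
def wordSpan (F : Type*) [Field F] (g d : ℕ) : Submodule F (FreeAlgebra F (Fin g)) :=
  Submodule.span F
    {x : FreeAlgebra F (Fin g) |
      ∃ w : List (Fin g), w.length ≤ d ∧ x = (w.map (FreeAlgebra.ι F)).prod}

lemma word_mem_wordSpan (F : Type*) [Field F] {g d : ℕ} (w : List (Fin g))
    (hw : w.length ≤ d) : (w.map (FreeAlgebra.ι F)).prod ∈ wordSpan F g d :=
  Submodule.subset_span ⟨w, hw, rfl⟩

lemma one_mem_wordSpan (F : Type*) [Field F] {g d : ℕ} :
    (1 : FreeAlgebra F (Fin g)) ∈ wordSpan F g d :=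
  Submodule.subset_span ⟨[], by simp, by simp⟩

/-- A linear functional on `F⟨X⟩_d` is tracial if `L (u * v) = L (v * u)` for all
words `u, v` with `|u| + |v| ≤ d`. -/
def IsTracial {F : Type*} [Field F] {g d : ℕ} (L : wordSpan F g d →ₗ[F] F) : Prop :=
  ∀ (u v : List (Fin g)) (h : u.length + v.length ≤ d),
    L ⟨((u ++ v).map (FreeAlgebra.ι F)).prod,
        word_mem_wordSpan F (u ++ v) (by rw [List.length_append]; exact h)⟩ =
    L ⟨((v ++ u).map (FreeAlgebra.ι F)).prod,
        word_mem_wordSpan F (v ++ u) (by rw [List.length_append]; omega)⟩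

/-!
A tracial functional with `L 1 ≠ 0` turns out to be a nonzero multiple of a single trace evaluation
`φ_A`; such an `A` automatically satisfies every constraint `tr (fᵢ A) = 0` with `L fᵢ = 0`.

Rescale `L` so that `L 1` is the intended matrix size `N`; what remains is to prescribe the traces
of the nonempty words of length at most `d`, as a function of the word that is invariant under
rotation. Taking block sums adds traces, so this can be done one length at a time. For length `n`,
let each cyclic word of that length act as a weighted cycle on `ZMod n`, each letter moving the
positions that carry it one step forward. The trace of a word then counts closed walks spelling it:
there are none unless `n` divides its length, so traces of shorter words are not disturbed, and a
word of length `n` is spelled `n` times in all, whence the invertibility of `d!`. The blocks have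
total dimension `∑ n * g ^ n`, independently of `L`, which is why `N` can be chosen in advance.
-/

open Matrix Finset
open scoped Nat

section WordTrace

variable {X R : Type*} {m n o : Type*} [Fintype m] [Fintype n] [Fintype o]
  [DecidableEq m] [DecidableEq n] [DecidableEq o]

/-- The trace of the matrix obtained by substituting the tuple `A` into the word `u`, with words
encoded as lists of letters. -/
def wordTrace [Semiring R] (A : X → Matrix n n R) (u : List X) : R :=
  trace (u.map A).prod

lemma wordTrace_eq_of_isRotated [CommSemiring R] (A : X → Matrix n n R) {u v : List X}
    (h : u ~r v) : wordTrace A u = wordTrace A v := by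
  obtain ⟨k, rfl⟩ := h
  conv_lhs => rw [← List.take_append_drop (k % u.length) u]
  rw [List.rotate_eq_drop_append_take_mod, wordTrace, wordTrace, List.map_append, List.map_append,
    List.prod_append, List.prod_append, trace_mul_comm]

lemma wordTrace_fromBlocks [Semiring R] (A : X → Matrix m m R) (B : X → Matrix n n R)
    (u : List X) :
    wordTrace (fun x => fromBlocks (A x) 0 0 (B x)) u = wordTrace A u + wordTrace B u := by
  have hprod : (u.map fun x => fromBlocks (A x) 0 0 (B x)).prod =
      fromBlocks (u.map A).prod 0 0 (u.map B).prod := by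
    induction u with
    | nil => simp
    | cons x u ih => simp [ih, fromBlocks_multiply]
  simp [wordTrace, hprod, trace, Fintype.sum_sum_type]

lemma wordTrace_blockDiagonal [Semiring R] (A : o → X → Matrix n n R) (u : List X) :
    wordTrace (fun x => blockDiagonal fun w => A w x) u = ∑ w, wordTrace (A w) u := by
  have hprod : (u.map fun x => blockDiagonal fun w => A w x).prod =
      blockDiagonal fun w => (u.map (A w)).prod := by
    induction u with
    | nil => simp [← Pi.one_def]
    | cons x u ih => simp [ih, blockDiagonal_mul]
  simp [wordTrace, hprod, trace_blockDiagonal]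

lemma wordTrace_reindex [Semiring R] (e : m ≃ n) (A : X → Matrix m m R) (u : List X) :
    wordTrace (fun x => reindex e e (A x)) u = wordTrace A u := by
  have hprod : (u.map fun x => reindex e e (A x)).prod = reindex e e (u.map A).prod := by
    simpa [Function.comp_def] using (map_list_prod (reindexRingEquiv R e) (u.map A)).symm
  rw [wordTrace, hprod]
  exact e.symm.sum_comp fun i => (u.map A).prod i i

lemma trace_lift_word [CommSemiring R] (A : X → Matrix n n R) (u : List X) :
    trace (FreeAlgebra.lift R A (u.map (FreeAlgebra.ι R)).prod) = wordTrace A u := by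
  simp [wordTrace, map_list_prod, Function.comp_def]

end WordTrace

section CyclicWord

variable {X : Type*} {n : ℕ}

/-- The list of the letters of a cyclic word `w`, read once around from position `0`. -/
def cyclicWordToList (w : ZMod n → X) : List X :=
  List.ofFn fun k : Fin n => w (k : ℕ)

lemma length_cyclicWordToList (w : ZMod n → X) : (cyclicWordToList w).length = n :=
  List.length_ofFn

variable [NeZero n]

lemma exists_cyclicWordToList_eq {u : List X} (hu : u.length = n) :
    ∃ w : ZMod n → X, cyclicWordToList w = u := by
  refine ⟨fun k => u[k.val]'(hu ▸ k.val_lt),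
    List.ext_getElem (by rw [length_cyclicWordToList, hu]) fun k _ hk => ?_⟩
  simp [cyclicWordToList, ZMod.val_natCast, Nat.mod_eq_of_lt (hu ▸ hk)]

lemma cyclicWordToList_add_left (w : ZMod n → X) (i : ZMod n) :
    cyclicWordToList (fun l => w (i + l)) = (cyclicWordToList w).rotate i.val := by
  refine List.ext_getElem (by simp [length_cyclicWordToList]) fun k _ _ => ?_
  simp [List.getElem_rotate, cyclicWordToList, add_comm]

end CyclicWord

section WeightedShift

variable {X R : Type*} {n : ℕ}

/-- The tuple of weighted cyclic shifts on `ZMod n`: the matrix of the letter `x` sends the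
position `i` to `i + 1` with weight `b x i`. -/
def weightedShift [Zero R] (b : X → ZMod n → R) (x : X) : Matrix (ZMod n) (ZMod n) R :=
  of fun i j => if j = i + 1 then b x i else 0

/-- The weights for which the weighted cyclic shifts walk once around the cyclic word `w`. The
scalar `c` is placed on a single step, so that each full turn picks it up exactly once. -/
def cycleWeight [Zero R] [One R] [DecidableEq X] (w : ZMod n → X) (c : R) (x : X)
    (i : ZMod n) : R :=
  if w i = x then if i = 0 then c else 1 else 0

variable [NeZero n]

lemma weightedShift_mul_apply [NonUnitalNonAssocSemiring R] (b : X → ZMod n → R) (x : X)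
    (M : Matrix (ZMod n) (ZMod n) R) (i j : ZMod n) :
    (weightedShift b x * M) i j = b x i * M (i + 1) j := by
  simp [mul_apply, weightedShift]

variable [CommSemiring R]

lemma prod_weightedShift_apply (b : X → ZMod n → R) {k : ℕ} (v : Fin k → X) (i j : ZMod n) :
    ((List.ofFn v).map (weightedShift b)).prod i j =
      if j = i + k then ∏ l : Fin k, b (v l) (i + (l : ℕ)) else 0 := by
  induction k generalizing i with
  | zero => simp [one_apply, eq_comm]
  | succ k ih =>
    rw [List.ofFn_succ, List.map_cons, List.prod_cons, weightedShift_mul_apply, ih]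
    simp [Fin.prod_univ_succ, add_assoc, add_comm (1 : ZMod n)]

lemma wordTrace_weightedShift_of_not_dvd (b : X → ZMod n → R) {u : List X}
    (hu : ¬ n ∣ u.length) : wordTrace (weightedShift b) u = 0 := by
  rw [← List.ofFn_get u, wordTrace, trace]
  refine sum_eq_zero fun i _ => ?_
  rw [diag_apply, prod_weightedShift_apply, if_neg]
  rwa [left_eq_add, ZMod.natCast_eq_zero_iff]

lemma wordTrace_weightedShift_cyclicWordToList (b : X → ZMod n → R) (v : ZMod n → X) :
    wordTrace (weightedShift b) (cyclicWordToList v) = ∑ i, ∏ l, b (v l) (i + l) := by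
  have hcast : Function.Bijective fun l : Fin n => ((l : ℕ) : ZMod n) := by
    refine (Fintype.bijective_iff_surjective_and_card _).2 ⟨fun z => ?_, by simp [ZMod.card]⟩
    exact ⟨⟨z.val, z.val_lt⟩, ZMod.natCast_zmod_val z⟩
  rw [wordTrace, trace]
  refine sum_congr rfl fun i _ => ?_
  rw [diag_apply, cyclicWordToList, prod_weightedShift_apply, if_pos (by simp)]
  exact hcast.prod_comp fun l => b (v l) (i + l)

lemma prod_cycleWeight [DecidableEq X] (w v : ZMod n → X) (c : R) (i : ZMod n) :
    ∏ l, cycleWeight w c (v l) (i + l) = if (fun l => w (i + l)) = v then c else 0 := by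
  have hturn : ∏ l : ZMod n, (if i + l = 0 then c else 1) = c :=
    (Fintype.prod_equiv (Equiv.addLeft i) _ (fun l => if l = 0 then c else 1) fun _ => rfl).trans
      (by simp)
  simp only [cycleWeight, prod_ite_zero, mem_univ, true_imp_iff, hturn, funext_iff]

lemma sum_wordTrace_cycleWeight [DecidableEq X] [Fintype X] {a : (ZMod n → X) → R}
    (ha : ∀ i w, a (fun l => w (i + l)) = a w) (v : ZMod n → X) :
    ∑ w, wordTrace (weightedShift (cycleWeight w (a w))) (cyclicWordToList v) = n * a v := by
  have hshift (i : ZMod n) :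
      ∑ w : ZMod n → X, (if (fun l => w (i + l)) = v then a w else 0) = a v := by
    calc ∑ w : ZMod n → X, (if (fun l => w (i + l)) = v then a w else 0)
        = ∑ w : ZMod n → X, (if (fun l => w (i + l)) = v then a fun l => w (i + l) else 0) := by
          simp only [ha]
      _ = ∑ w, (if w = v then a w else 0) :=
          ((Equiv.addLeft i).symm.arrowCongr (Equiv.refl X)).sum_comp
            fun w => if w = v then a w else 0
      _ = a v := by simp
  simp only [wordTrace_weightedShift_cyclicWordToList, prod_cycleWeight]
  rw [sum_comm]
  simp [hshift, ZMod.card]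

end WeightedShift

section PrescribedTraces

variable {X R : Type*} [Fintype X]

theorem exists_wordTrace_eq_of_length_eq [DecidableEq X] [CommSemiring R] {n : ℕ} [NeZero n]
    (hn : IsUnit (n : R)) {ψ : List X → R}
    (hψ : ∀ u v, u ~r v → u.length = n → ψ u = ψ v) :
    ∃ B : X → Matrix (ZMod n × (ZMod n → X)) (ZMod n × (ZMod n → X)) R,
      (∀ u, ¬ n ∣ u.length → wordTrace B u = 0) ∧ ∀ u, u.length = n → wordTrace B u = ψ u := by
  obtain ⟨c, hc⟩ := hn.exists_right_inv
  let a (w : ZMod n → X) : R := c * ψ (cyclicWordToList w)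
  have ha (i : ZMod n) (w : ZMod n → X) : a (fun l => w (i + l)) = a w := by
    simp only [a, cyclicWordToList_add_left]
    rw [hψ _ _ ⟨i.val, rfl⟩ (length_cyclicWordToList w)]
  refine ⟨fun x => blockDiagonal fun w => weightedShift (cycleWeight w (a w)) x, ?_, ?_⟩
  · intro u hu
    simp [wordTrace_blockDiagonal, wordTrace_weightedShift_of_not_dvd _ hu]
  · intro u hu
    obtain ⟨v, rfl⟩ := exists_cyclicWordToList_eq hu
    rw [wordTrace_blockDiagonal, sum_wordTrace_cycleWeight ha, ← mul_assoc, hc, one_mul]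

theorem exists_wordTrace_eq [CommRing R] {d N : ℕ} (hd : IsUnit (d ! : R))
    (hN : ∑ n ∈ range d, (n + 1) * Fintype.card X ^ (n + 1) ≤ N) {ψ : List X → R}
    (hψ : ∀ u v, u ~r v → u.length ≤ d → ψ u = ψ v) :
    ∃ A : X → Matrix (Fin N) (Fin N) R,
      ∀ u, u ≠ [] → u.length ≤ d → wordTrace A u = ψ u := by
  classical
  induction d generalizing N with
  | zero => exact ⟨0, fun u hu hu0 => absurd (List.length_eq_zero_iff.1 (Nat.le_zero.1 hu0)) hu⟩
  | succ d ih =>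
    rw [Nat.factorial_succ, Nat.cast_mul, IsUnit.mul_iff] at hd
    rw [sum_range_succ] at hN
    obtain ⟨A, hA⟩ := ih hd.2 (Nat.le_sub_of_add_le hN) fun u v h hu => hψ u v h (by lia)
    obtain ⟨B, hB0, hB⟩ := exists_wordTrace_eq_of_length_eq hd.1 (ψ := fun u => ψ u - wordTrace A u)
      fun u v h hu => by simp only [hψ u v h hu.le, wordTrace_eq_of_isRotated A h]
    have hcard : Fintype.card (Fin (N - (d + 1) * Fintype.card X ^ (d + 1)) ⊕
        (ZMod (d + 1) × (ZMod (d + 1) → X))) = N := by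
      simp only [Fintype.card_sum, Fintype.card_prod, Fintype.card_fun, Fintype.card_fin, ZMod.card]
      lia
    refine ⟨fun x => reindex (Fintype.equivFinOfCardEq hcard) (Fintype.equivFinOfCardEq hcard)
      (fromBlocks (A x) 0 0 (B x)), fun u hu0 hu => ?_⟩
    rw [wordTrace_reindex, wordTrace_fromBlocks]
    obtain hlt | heq := Nat.lt_or_eq_of_le hu
    · have hndvd : ¬ d + 1 ∣ u.length :=
        Nat.not_dvd_of_pos_of_lt (List.length_pos_iff.2 hu0) hlt
      rw [hA u hu0 (Nat.lt_succ_iff.1 hlt), hB0 u hndvd, add_zero]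
    · rw [hB u heq, add_sub_cancel]

end PrescribedTraces

section Tracial

variable {F : Type*} [Field F] {g d : ℕ}

lemma IsTracial.apply_eq_of_isRotated {L : wordSpan F g d →ₗ[F] F} (hL : IsTracial L)
    {u v : List (Fin g)} (h : u ~r v) (hu : u.length ≤ d) :
    L ⟨(u.map (FreeAlgebra.ι F)).prod, word_mem_wordSpan F u hu⟩ =
      L ⟨(v.map (FreeAlgebra.ι F)).prod, word_mem_wordSpan F v (h.perm.length_eq ▸ hu)⟩ := by
  obtain ⟨k, rfl⟩ := h
  have h := hL (u.take (k % u.length)) (u.drop (k % u.length))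
    (by rwa [← List.length_append, List.take_append_drop])
  simpa only [List.take_append_drop, ← List.rotate_eq_drop_append_take_mod] using h

lemma IsTracial.smul {L : wordSpan F g d →ₗ[F] F} (hL : IsTracial L) (c : F) :
    IsTracial (c • L) := fun u v h => by
  rw [LinearMap.smul_apply, LinearMap.smul_apply, hL u v h]

theorem IsTracial.exists_eq_trace {T : wordSpan F g d →ₗ[F] F} (hT : IsTracial T) {N : ℕ}
    (hone : T ⟨1, one_mem_wordSpan F⟩ = N) (hd : (d ! : F) ≠ 0)
    (hN : ∑ n ∈ range d, (n + 1) * g ^ (n + 1) ≤ N) :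
    ∃ A : Fin g → Matrix (Fin N) (Fin N) F,
      ∀ p : wordSpan F g d, T p = trace (FreeAlgebra.lift F A (p : FreeAlgebra F (Fin g))) := by
  obtain ⟨S, rfl⟩ := T.exists_extend
  obtain ⟨A, hA⟩ := exists_wordTrace_eq hd.isUnit (by simpa using hN)
    (ψ := fun u => S (u.map (FreeAlgebra.ι F)).prod)
    fun u v h hu => hT.apply_eq_of_isRotated h hu
  refine ⟨A, fun p => LinearMap.eqOn_span (f := S)
    (g := traceLinearMap (Fin N) F F ∘ₗ (FreeAlgebra.lift F A).toLinearMap) ?_ p.2⟩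
  rintro _ ⟨u, hu, rfl⟩
  change _ = trace (FreeAlgebra.lift F A _)
  rw [trace_lift_word]
  obtain rfl | hu0 := eq_or_ne u []
  · simpa [wordTrace] using hone
  · exact (hA u hu0 hu).symm

end Tracial

theorem constrained_tracial_moment_problem_complex_general {F : Type*} [Field F] {g d : ℕ}
    (hd : (d ! : F) ≠ 0) {L : wordSpan F g d →ₗ[F] F} (hL : IsTracial L)
    (hone : L ⟨1, one_mem_wordSpan F⟩ ≠ 0) :
    ∃ (N : ℕ) (c : F) (A : Fin g → Matrix (Fin N) (Fin N) F), c ≠ 0 ∧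
      ∀ p : wordSpan F g d,
        L p = c * trace (FreeAlgebra.lift F A (p : FreeAlgebra F (Fin g))) := by
  obtain ⟨N, hN, hN0⟩ : ∃ N, ∑ n ∈ range d, (n + 1) * g ^ (n + 1) ≤ N ∧ (N : F) ≠ 0 := by
    by_cases h : ((∑ n ∈ range d, (n + 1) * g ^ (n + 1) : ℕ) : F) = 0
    · exact ⟨_, Nat.le_succ _, by simp [Nat.cast_succ, h]⟩
    · exact ⟨_, le_rfl, h⟩
  set s := L ⟨1, one_mem_wordSpan F⟩ with hs
  obtain ⟨A, hA⟩ := (hL.smul (N / s)).exists_eq_trace (N := N) (by simp [← hs, hone]) hd hN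
  refine ⟨N, s / N, A, div_ne_zero hone hN0, fun p => ?_⟩
  rw [← hA p, LinearMap.smul_apply, smul_eq_mul]
  field_simp

/-- **Constrained truncated tracial moment problem, complex case.** A tracial linear
functional `L` on `ℂ⟨X⟩_d` with `L 1 = 1` vanishing on `f₁, …, f_r` is a linear
combination of trace-evaluation functionals `p ↦ tr (p A)` at tuples `A` of complex
matrices satisfying `tr (f₁ A) = ⋯ = tr (f_r A) = 0`. -/
theorem constrained_tracial_moment_problem_complex (g d r : ℕ)
    (f : Fin r → wordSpan ℂ g d)
    (L : wordSpan ℂ g d →ₗ[ℂ] ℂ) (hL : IsTracial L)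
    (hone : L ⟨1, one_mem_wordSpan ℂ⟩ = 1)
    (hf : ∀ i : Fin r, L (f i) = 0) :
    ∃ (k : ℕ) (lam : Fin k → ℂ) (sz : Fin k → ℕ)
      (A : (ℓ : Fin k) → Fin g → Matrix (Fin (sz ℓ)) (Fin (sz ℓ)) ℂ),
      (∀ (ℓ : Fin k) (i : Fin r),
        Matrix.trace (FreeAlgebra.lift ℂ (A ℓ) ((f i : wordSpan ℂ g d) : FreeAlgebra ℂ (Fin g))) = 0) ∧
      ∀ p : wordSpan ℂ g d,
        L p = ∑ ℓ : Fin k,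
          lam ℓ * Matrix.trace (FreeAlgebra.lift ℂ (A ℓ) (p : FreeAlgebra ℂ (Fin g))) := by
  obtain ⟨N, c, A, hc, hA⟩ := constrained_tracial_moment_problem_complex_general
    (Nat.cast_ne_zero.2 d.factorial_ne_zero) hL (hone ▸ one_ne_zero)
  exact ⟨1, fun _ => c, fun _ => N, fun _ => A,
    fun _ i => by simpa [hA, hc] using hf i, fun p => by simp [hA]⟩
end

section
/- Let d ∈ ℕ and let L : ℝ⟨X⟩_d → ℝ be a tracial linear functional. Then there exist k ∈ ℕ, scalars λ₁, …, λ_k ∈ ℝ, sizes n₁, …, n_k ∈ ℕ with n_ℓ ≤ max(d, 1) for all ℓ, and tuples A_ℓ ∈ M_{n_ℓ}(ℝ)^g such that L(p) = Σ_{ℓ=1}^k λ_ℓ · tr(p(A_ℓ)) for every p ∈ ℝ⟨X⟩_d. -/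
/-!
Fix a word `w` and let each letter act on the linear span of the distinct rotations of `w`, moving
the letter from the front of a word to its end and killing the words that start with another letter.
A word `v` of the same length as `w` fixes the basis vector `v`, if this is a rotation of `w`, and
kills all the others, so the trace of `v` is the indicator of the rotation class of `w`. There are
at most `max |w| 1` rotations. Rescaling the matrices by `t` multiplies the trace of `v` by
`t ^ |v|`, so over an infinite field Lagrange interpolation in `t` isolates the words of length
`|w|`. A tracial functional is a linear combination of indicators of rotation classes.
-/

section TraceFunctional

variable {R α m n : Type*} [CommSemiring R] [Fintype m] [DecidableEq m] [Fintype n] [DecidableEq n]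

/-- The functional `p ↦ tr (p(A))` on the free algebra, for a tuple `A` of square matrices. -/
def traceFunctional (A : α → Matrix n n R) : FreeAlgebra R α →ₗ[R] R :=
  Matrix.traceLinearMap n R R ∘ₗ (FreeAlgebra.lift R A).toLinearMap

lemma traceFunctional_apply (A : α → Matrix n n R) (p : FreeAlgebra R α) :
    traceFunctional A p = (FreeAlgebra.lift R A p).trace :=
  rfl

lemma traceFunctional_word (A : α → Matrix n n R) (v : List α) :
    traceFunctional A (v.map (FreeAlgebra.ι R)).prod = (v.map A).prod.trace := by
  rw [traceFunctional_apply, map_list_prod, List.map_map]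
  congr 3
  funext i
  simp

lemma traceFunctional_smul_word (t : R) (A : α → Matrix n n R) (v : List α) :
    traceFunctional (t • A) (v.map (FreeAlgebra.ι R)).prod =
      t ^ v.length * traceFunctional A (v.map (FreeAlgebra.ι R)).prod := by
  have prod_smul : (v.map (t • A)).prod = t ^ v.length • (v.map A).prod := by
    induction v with
    | nil => simp
    | cons a v ih => simp [ih, pow_succ, smul_smul, mul_comm]
  rw [traceFunctional_word, traceFunctional_word, prod_smul, Matrix.trace_smul, smul_eq_mul]

lemma traceFunctional_reindex (e : m ≃ n) (A : α → Matrix m m R) :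
    traceFunctional (fun i ↦ Matrix.reindexAlgEquiv R R e (A i)) = traceFunctional A := by
  have lift_reindex : FreeAlgebra.lift R (fun i ↦ Matrix.reindexAlgEquiv R R e (A i)) =
      (Matrix.reindexAlgEquiv R R e).toAlgHom.comp (FreeAlgebra.lift R A) := by
    ext1
    funext i
    simp
  ext p
  rw [traceFunctional_apply, traceFunctional_apply, lift_reindex]
  exact e.symm.sum_comp fun i ↦ FreeAlgebra.lift R A p i i

variable (R α) in
/-- The linear combinations of the functionals `p ↦ tr (p(A))` with matrices `A` of size at most
`N`. -/
def traceSpan (N : ℕ) : Submodule R (FreeAlgebra R α →ₗ[R] R) :=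
  Submodule.span R {φ | ∃ k ≤ N, ∃ A : α → Matrix (Fin k) (Fin k) R, φ = traceFunctional A}

lemma traceFunctional_mem_traceSpan {N : ℕ} (hN : Fintype.card n ≤ N) (A : α → Matrix n n R) :
    traceFunctional A ∈ traceSpan R α N :=
  Submodule.subset_span
    ⟨_, hN, _, (traceFunctional_reindex (Fintype.equivFin n) A).symm⟩

lemma exists_eq_sum_trace_of_mem_traceSpan {N : ℕ} {φ : FreeAlgebra R α →ₗ[R] R}
    (hφ : φ ∈ traceSpan R α N) :
    ∃ (k : ℕ) (lam : Fin k → R) (sz : Fin k → ℕ)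
      (A : (ℓ : Fin k) → α → Matrix (Fin (sz ℓ)) (Fin (sz ℓ)) R),
      (∀ ℓ, sz ℓ ≤ N) ∧
      ∀ p, φ p = ∑ ℓ, lam ℓ * Matrix.trace (FreeAlgebra.lift R (A ℓ) p) := by
  obtain ⟨k, lam, ψ, rfl⟩ := Submodule.mem_span_set'.1 hφ
  choose sz hsz A hA using fun ℓ ↦ (ψ ℓ).2
  exact ⟨k, lam, sz, A, hsz, fun p ↦ by simp [hA, traceFunctional_apply]⟩

end TraceFunctional

section HomogeneousComponent

variable {F : Type*} [Field F] [Infinite F]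

lemma exists_sum_mul_pow_eq_ite (d m : ℕ) :
    ∃ (s : Finset F) (c : F → F),
      ∀ j ≤ d, ∑ t ∈ s, c t * t ^ j = if j = m then 1 else 0 := by
  classical
  obtain ⟨s, hs⟩ := Infinite.exists_subset_card_eq F (d + 1)
  refine ⟨s, fun t ↦ (Lagrange.basis s id t).coeff m, fun j hj ↦ ?_⟩
  have interpolation : (Polynomial.X ^ j : Polynomial F) =
      Lagrange.interpolate s id fun t ↦ t ^ j := by
    refine Lagrange.eq_interpolate_of_eval_eq _ (Set.injOn_id _) ?_ fun t _ ↦ by simp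
    rw [Polynomial.degree_X_pow, hs]
    exact_mod_cast Nat.lt_succ_of_le hj
  have coeff_eq := congrArg (Polynomial.coeff · m) interpolation
  simp only [Polynomial.coeff_X_pow, Lagrange.interpolate_apply, Polynomial.finsetSum_coeff,
    Polynomial.coeff_C_mul] at coeff_eq
  simpa only [mul_comm, eq_comm] using coeff_eq.symm

lemma exists_mem_traceSpan_word_eq_ite_length {α n : Type*} [Fintype n] [DecidableEq n] {N : ℕ}
    (hN : Fintype.card n ≤ N) (A : α → Matrix n n F) (d m : ℕ) :
    ∃ φ ∈ traceSpan F α N, ∀ v : List α, v.length ≤ d →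
      φ (v.map (FreeAlgebra.ι F)).prod =
        if v.length = m then traceFunctional A (v.map (FreeAlgebra.ι F)).prod else 0 := by
  obtain ⟨s, c, hc⟩ := exists_sum_mul_pow_eq_ite (F := F) d m
  refine ⟨∑ t ∈ s, c t • traceFunctional (t • A), ?_, fun v hv ↦ ?_⟩
  · exact Submodule.sum_mem _ fun t _ ↦
      Submodule.smul_mem _ _ (traceFunctional_mem_traceSpan hN (t • A))
  · simp only [LinearMap.sum_apply, LinearMap.smul_apply, traceFunctional_smul_word, smul_eq_mul,
      ← mul_assoc]
    rw [← Finset.sum_mul, hc _ hv, ite_mul, one_mul, zero_mul]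

end HomogeneousComponent

section RotationMatrix

variable {α : Type*}

lemma append_prefix_iff_prefix_rotate {u v x : List α} (h : u.length + v.length ≤ x.length) :
    u ++ v <+: x ↔ u <+: x ∧ v <+: x.rotate u.length := by
  constructor
  · rintro ⟨s, rfl⟩
    rw [List.append_assoc, List.rotate_append_length_eq, List.append_assoc]
    exact ⟨List.prefix_append _ _, List.prefix_append _ _⟩
  · rintro ⟨⟨s, rfl⟩, hv⟩
    rw [List.length_append] at h
    rw [List.rotate_append_length_eq, List.isPrefix_append_of_length (by omega)] at hv
    exact (List.prefix_append_right_inj u).2 hv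

variable [DecidableEq α]

/-- The set of distinct rotations of a word. -/
def rotationClass (w : List α) : Finset (List α) :=
  w.cyclicPermutations.toFinset

lemma mem_rotationClass {w x : List α} : x ∈ rotationClass w ↔ x ~r w := by
  rw [rotationClass, List.mem_toFinset, List.mem_cyclicPermutations_iff]

lemma card_rotationClass_le (w : List α) : (rotationClass w).card ≤ max w.length 1 := by
  refine (List.toFinset_card_le _).trans ?_
  cases w with
  | nil => rfl
  | cons a w => exact (List.length_cyclicPermutations_cons a w).le.trans (le_max_left _ _)

variable (R : Type*) [Semiring R]

/-- The action of the word `v` on the free module over the distinct rotations of `w`: a rotation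
`v ++ s` is sent to `s ++ v`, and the rotations not starting with `v` are sent to `0`. Vectors are
rows, so that the first letter of `v` acts first. -/
def rotationMatrix (w v : List α) :
    Matrix (rotationClass w) (rotationClass w) R :=
  Matrix.of fun x y ↦ if v <+: x.1 ∧ x.1.rotate v.length = y.1 then 1 else 0

lemma rotationMatrix_nil (w : List α) : rotationMatrix R w [] = 1 := by
  ext x y
  simp [rotationMatrix, Matrix.one_apply]

lemma rotationMatrix_append {w u v : List α} (h : u.length + v.length ≤ w.length) :
    rotationMatrix R w (u ++ v) = rotationMatrix R w u * rotationMatrix R w v := by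
  ext x y
  have x_rot : x.1 ~r w := mem_rotationClass.1 x.2
  let z : rotationClass w :=
    ⟨x.1.rotate u.length, mem_rotationClass.2 ((List.IsRotated.symm ⟨u.length, rfl⟩).trans x_rot)⟩
  rw [Matrix.mul_apply, Finset.sum_eq_single z]
  · simp [rotationMatrix, z, append_prefix_iff_prefix_rotate (h.trans_eq x_rot.perm.length_eq.symm),
      List.rotate_rotate, ← ite_and, and_assoc, and_comm]
  · intro z' _ hz'
    have : x.1.rotate u.length ≠ z'.1 := fun h ↦ hz' (Subtype.ext h.symm)
    simp [rotationMatrix, this]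
  · simp

lemma prod_map_rotationMatrix_singleton {w v : List α} (h : v.length ≤ w.length) :
    (v.map fun a ↦ rotationMatrix R w [a]).prod = rotationMatrix R w v := by
  induction v with
  | nil => simp [rotationMatrix_nil]
  | cons a v ih =>
    rw [List.length_cons] at h
    rw [List.map_cons, List.prod_cons, ih (by omega), ← rotationMatrix_append,
      List.singleton_append]
    simpa [add_comm] using h

lemma trace_rotationMatrix_of_length_eq {w v : List α} (h : v.length = w.length) :
    (rotationMatrix R w v).trace = if v ~r w then 1 else 0 := by
  have diag_eq (x : rotationClass w) :
      rotationMatrix R w v x x = if v = x.1 then 1 else 0 := by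
    have x_rot : x.1 ~r w := mem_rotationClass.1 x.2
    have length_eq : v.length = x.1.length := h.trans x_rot.perm.length_eq.symm
    have prefix_iff : v <+: x.1 ↔ v = x.1 :=
      ⟨fun hv ↦ hv.eq_of_length length_eq, fun hv ↦ hv ▸ List.prefix_rfl⟩
    simp [rotationMatrix, length_eq, prefix_iff]
  simp only [Matrix.trace, Matrix.diag_apply, diag_eq]
  rw [Finset.sum_coe_sort _ fun x ↦ if v = x then (1 : R) else 0, Finset.sum_ite_eq]
  simp only [mem_rotationClass]

lemma exists_mem_traceSpan_word_eq_ite_isRotated (F : Type*) [Field F] [Infinite F] {d : ℕ}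
    (w : List α) (hw : w.length ≤ d) :
    ∃ φ ∈ traceSpan F α (max d 1), ∀ v : List α, v.length ≤ d →
      φ (v.map (FreeAlgebra.ι F)).prod = if v ~r w then 1 else 0 := by
  have card_le : Fintype.card (rotationClass w) ≤ max d 1 := by
    rw [Fintype.card_coe]
    exact (card_rotationClass_le w).trans (max_le_max_right 1 hw)
  obtain ⟨φ, hφ, hφ_word⟩ := exists_mem_traceSpan_word_eq_ite_length card_le
    (fun a ↦ rotationMatrix F w [a]) d w.length
  refine ⟨φ, hφ, fun v hv ↦ (hφ_word v hv).trans ?_⟩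
  split_ifs with length_eq rotated rotated
  · rw [traceFunctional_word, prod_map_rotationMatrix_singleton F length_eq.le,
      trace_rotationMatrix_of_length_eq F length_eq, if_pos rotated]
  · rw [traceFunctional_word, prod_map_rotationMatrix_singleton F length_eq.le,
      trace_rotationMatrix_of_length_eq F length_eq, if_neg rotated]
  · exact absurd rotated.perm.length_eq length_eq
  · rfl

end RotationMatrix

section RotationInvariant

variable {α : Type*}

lemma isRotated_out_iff {v : List α} {c : Cycle α} : v ~r c.out ↔ ↑v = c := by
  rw [← Cycle.coe_eq_coe]
  exact (Quotient.out_eq c).congr_right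

lemma exists_mem_traceSpan_word_eq_of_isRotated [Finite α] {F : Type*} [Field F] [Infinite F]
    {d : ℕ} (f : List α → F) (hf : ∀ u v, u ~r v → u.length ≤ d → f u = f v) :
    ∃ φ ∈ traceSpan F α (max d 1), ∀ v : List α, v.length ≤ d →
      φ (v.map (FreeAlgebra.ι F)).prod = f v := by
  classical
  let classes : Finset (Cycle α) := (List.finite_length_le α d).toFinset.image (↑)
  have length_out_le : ∀ c ∈ classes, c.out.length ≤ d := by
    intro c hc
    obtain ⟨v, hv, v_eq⟩ := Finset.mem_image.1 hc
    rw [← (isRotated_out_iff.2 v_eq).perm.length_eq]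
    simpa using hv
  choose! φ hφ hφ_word using exists_mem_traceSpan_word_eq_ite_isRotated (α := α) (d := d) F
  refine ⟨∑ c ∈ classes, f c.out • φ c.out, Submodule.sum_mem _ fun c hc ↦
    Submodule.smul_mem _ _ (hφ _ (length_out_le c hc)), fun v hv ↦ ?_⟩
  have v_mem : (v : Cycle α) ∈ classes := Finset.mem_image_of_mem _ (by simpa using hv)
  calc
    (∑ c ∈ classes, f c.out • φ c.out) (v.map (FreeAlgebra.ι F)).prod
      = ∑ c ∈ classes, f c.out * φ c.out (v.map (FreeAlgebra.ι F)).prod := by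
        simp only [LinearMap.sum_apply, LinearMap.smul_apply, smul_eq_mul]
    _ = ∑ c ∈ classes, if ↑v = c then f c.out else 0 := by
        refine Finset.sum_congr rfl fun c hc ↦ ?_
        simp only [hφ_word _ (length_out_le c hc) v hv, isRotated_out_iff, mul_ite, mul_one,
          mul_zero]
    _ = f (v : Cycle α).out := by rw [Finset.sum_ite_eq, if_pos v_mem]
    _ = f v := (hf v _ (isRotated_out_iff.2 rfl) hv).symm

end RotationInvariant

namespace IsTracial

variable {F : Type*} [Field F] {g d : ℕ} {L : wordSpan F g d →ₗ[F] F}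

lemma apply_eq_of_isRotated_s14 (hL : IsTracial L) {u v : List (Fin g)} (huv : u ~r v)
    (hu : u.length ≤ d) :
    L ⟨(u.map (FreeAlgebra.ι F)).prod, word_mem_wordSpan F u hu⟩ =
      L ⟨(v.map (FreeAlgebra.ι F)).prod,
        word_mem_wordSpan F v (huv.perm.length_eq ▸ hu)⟩ := by
  obtain ⟨k, hk, rfl⟩ := List.isRotated_iff_mod.1 huv
  have tracial := hL (u.take k) (u.drop k) (by
    rwa [← List.length_append, List.take_append_drop])
  simpa only [List.take_append_drop, ← List.rotate_eq_drop_append_take hk] using tracial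

lemma exists_mem_traceSpan_eqOn_wordSpan [Infinite F] (hL : IsTracial L) :
    ∃ φ ∈ traceSpan F (Fin g) (max d 1), ∀ p : wordSpan F g d, L p = φ p := by
  obtain ⟨L', hL'⟩ := L.exists_extend
  have L'_apply (p : wordSpan F g d) : L' p = L p := LinearMap.congr_fun hL' p
  obtain ⟨φ, hφ, hφ_word⟩ := exists_mem_traceSpan_word_eq_of_isRotated (d := d)
    (fun v : List (Fin g) ↦ L' (v.map (FreeAlgebra.ι F)).prod) fun u v huv hu ↦ by
      simpa only [← L'_apply] using hL.apply_eq_of_isRotated_s14 huv hu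
  have eqOn_words : Set.EqOn L' φ
      {x | ∃ w : List (Fin g), w.length ≤ d ∧ x = (w.map (FreeAlgebra.ι F)).prod} := by
    rintro _ ⟨v, hv, rfl⟩
    exact (hφ_word v hv).symm
  exact ⟨φ, hφ, fun p ↦ (L'_apply p).symm.trans (LinearMap.eqOn_span' eqOn_words p.2)⟩

end IsTracial

theorem tracial_functional_is_combination_of_small_traces_general {F : Type*} [Field F]
    [Infinite F] (g d : ℕ) (L : wordSpan F g d →ₗ[F] F) (hL : IsTracial L) :
    ∃ (k : ℕ) (lam : Fin k → F) (sz : Fin k → ℕ)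
      (A : (ℓ : Fin k) → Fin g → Matrix (Fin (sz ℓ)) (Fin (sz ℓ)) F),
      (∀ ℓ : Fin k, sz ℓ ≤ max d 1) ∧
      ∀ p : wordSpan F g d,
        L p = ∑ ℓ : Fin k,
          lam ℓ * Matrix.trace (FreeAlgebra.lift F (A ℓ) (p : FreeAlgebra F (Fin g))) := by
  obtain ⟨φ, hφ, L_eq⟩ := hL.exists_mem_traceSpan_eqOn_wordSpan
  obtain ⟨k, lam, sz, A, hsz, φ_eq⟩ := exists_eq_sum_trace_of_mem_traceSpan hφ
  exact ⟨k, lam, sz, A, hsz, fun p ↦ (L_eq p).trans (φ_eq p)⟩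

/-- Every tracial linear functional on `ℝ⟨X⟩_d` is a linear combination of the
functionals `p ↦ tr (p A)` for tuples of real matrices `A` of sizes at most
`max d 1`. -/
theorem tracial_functional_is_combination_of_small_traces (g d : ℕ)
    (L : wordSpan ℝ g d →ₗ[ℝ] ℝ) (hL : IsTracial L) :
    ∃ (k : ℕ) (lam : Fin k → ℝ) (sz : Fin k → ℕ)
      (A : (ℓ : Fin k) → Fin g → Matrix (Fin (sz ℓ)) (Fin (sz ℓ)) ℝ),
      (∀ ℓ : Fin k, sz ℓ ≤ max d 1) ∧
      ∀ p : wordSpan ℝ g d,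
        L p = ∑ ℓ : Fin k,
          lam ℓ * Matrix.trace (FreeAlgebra.lift ℝ (A ℓ) (p : FreeAlgebra ℝ (Fin g))) :=
  tracial_functional_is_combination_of_small_traces_general g d L hL
end
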